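/- arXiv:1010.2296 — 2 statements merged into one kernel-verified Lean document; each statement's English description precedes it below -/
import Mathlib

section
/- Every finite connected simple graph G of order n ≥ 4 and minimum degree δ has a connected two-way two-step dominating set D of size at most 3n/(δ + 1) − 2. -/
open SimpleGraph Set

/-- The predicate that an edge colouring `c` makes `G` rainbow connected: every pair of
vertices is joined by a path no two of whose edges receive the same colour. -/
def RainbowConnectedUnder {V : Type*} (G : SimpleGraph V) (c : Sym2 V → ℕ) : Prop :=
  ∀ u v : V, ∃ p : G.Walk u v, p.IsPath ∧ (p.edges.map c).Nodup

/-- The rainbow connection number of `G`: the least `n` such that some edge colouring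
using colours `< n` makes `G` rainbow connected. -/
noncomputable def rc {V : Type*} (G : SimpleGraph V) : ℕ :=
  sInf {n | ∃ c : Sym2 V → ℕ, (∀ e ∈ G.edgeSet, c e < n) ∧ RainbowConnectedUnder G c}

/-- Degree of a vertex (as the cardinality of its neighbour set). -/
noncomputable def deg {V : Type*} (G : SimpleGraph V) (v : V) : ℕ := (G.neighborSet v).ncard

/-- `D` is a dominating set of `G`. -/
def IsDominatingSet {V : Type*} (G : SimpleGraph V) (D : Set V) : Prop :=
  ∀ v : V, v ∈ D ∨ ∃ u ∈ D, G.Adj u v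

/-- The connected domination number of `G`. -/
noncomputable def connDomNum {V : Type*} (G : SimpleGraph V) : ℕ :=
  sInf {n | ∃ D : Set V, D.ncard = n ∧ IsDominatingSet G D ∧ (G.induce D).Connected}

/-- Distance of a vertex `v` to a set of vertices `D`. -/
noncomputable def distSet {V : Type*} (G : SimpleGraph V) (D : Set V) (v : V) : ℕ :=
  sInf ((fun u => G.dist u v) '' D)

/-- Diameter of `G`. -/
noncomputable def graphDiam {V : Type*} (G : SimpleGraph V) : ℕ :=
  sSup (Set.range fun p : V × V => G.dist p.1 p.2)

/-- Eccentricity of a vertex. -/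
noncomputable def ecc {V : Type*} (G : SimpleGraph V) (v : V) : ℕ :=
  sSup (Set.range fun u => G.dist v u)

/-- Radius of `G`. -/
noncomputable def graphRadius {V : Type*} (G : SimpleGraph V) : ℕ :=
  sInf (Set.range fun v => ecc G v)

/-- `G` is an interval graph: vertices can be assigned nonempty closed real intervals such
that two distinct vertices are adjacent iff their intervals intersect. -/
def IsIntervalGraph {V : Type*} (G : SimpleGraph V) : Prop :=
  ∃ a b : V → ℝ, (∀ v, a v ≤ b v) ∧
    ∀ u v : V, u ≠ v → (G.Adj u v ↔ (Set.Icc (a u) (b u) ∩ Set.Icc (a v) (b v)).Nonempty)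

/-- `G` is a unit interval graph. -/
def IsUnitIntervalGraph {V : Type*} (G : SimpleGraph V) : Prop :=
  ∃ a : V → ℝ,
    ∀ u v : V, u ≠ v →
      (G.Adj u v ↔ (Set.Icc (a u) (a u + 1) ∩ Set.Icc (a v) (a v + 1)).Nonempty)

/-- `G` is a circular arc graph: vertices can be assigned nonempty closed arcs of a circle
(images of closed intervals in `AddCircle 1`) such that two distinct vertices are adjacent
iff their arcs intersect. -/
def IsCircularArcGraph {V : Type*} (G : SimpleGraph V) : Prop :=
  ∃ a b : V → ℝ, (∀ v, a v ≤ b v) ∧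
    ∀ u v : V, u ≠ v → (G.Adj u v ↔
      (((fun x : ℝ => (x : AddCircle (1:ℝ))) '' Set.Icc (a u) (b u)) ∩
        ((fun x : ℝ => (x : AddCircle (1:ℝ))) '' Set.Icc (a v) (b v))).Nonempty)

/-- There is a path from `x` to `y` avoiding the closed neighbourhood of `z`. -/
def HasAvoidingPath {V : Type*} (G : SimpleGraph V) (x y z : V) : Prop :=
  ∃ p : G.Walk x y, p.IsPath ∧ ∀ w ∈ p.support, w ≠ z ∧ ¬ G.Adj z w

/-- `G` is AT-free: it has no asteroidal triple. -/
def IsATFree {V : Type*} (G : SimpleGraph V) : Prop :=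
  ¬ ∃ x y z : V, x ≠ y ∧ y ≠ z ∧ x ≠ z ∧ ¬G.Adj x y ∧ ¬G.Adj y z ∧ ¬G.Adj x z ∧
    HasAvoidingPath G x y z ∧ HasAvoidingPath G y z x ∧ HasAvoidingPath G x z y

/-- `G` is a threshold graph. -/
def IsThresholdGraph {V : Type*} (G : SimpleGraph V) : Prop :=
  ∃ (w : V → ℝ) (t : ℝ), ∀ u v : V, u ≠ v → (G.Adj u v ↔ t ≤ w u + w v)

/-- `G` is a chain graph: bipartite with the neighbourhoods of one side linearly ordered
by inclusion. -/
def IsChainGraph {V : Type*} (G : SimpleGraph V) : Prop :=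
  ∃ A B : Set V, A ∪ B = Set.univ ∧ Disjoint A B ∧
    (∀ u v : V, G.Adj u v → ¬(u ∈ A ∧ v ∈ A) ∧ ¬(u ∈ B ∧ v ∈ B)) ∧
    ∀ a₁ ∈ A, ∀ a₂ ∈ A,
      G.neighborSet a₁ ⊆ G.neighborSet a₂ ∨ G.neighborSet a₂ ⊆ G.neighborSet a₁

/-- `G` is chordal: it has no induced cycle of length greater than 3. -/
def IsChordal {V : Type*} (G : SimpleGraph V) : Prop :=
  ∀ n : ℕ, 4 ≤ n → IsEmpty (SimpleGraph.cycleGraph n ↪g G)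

/-- Closed neighbourhood of a set. -/
def closedNbhd {V : Type*} (G : SimpleGraph V) (D : Set V) : Set V :=
  {v | v ∈ D ∨ ∃ u ∈ D, G.Adj u v}

lemma closedNbhd_mono {V : Type*} (G : SimpleGraph V) {D E : Set V} (h : D ⊆ E) :
    closedNbhd G D ⊆ closedNbhd G E := by
  rintro v (hv | ⟨u, hu, ha⟩)
  · exact Or.inl (h hv)
  · exact Or.inr ⟨u, h hu, ha⟩

lemma distSet_le_of_mem {V : Type*} (G : SimpleGraph V) {D : Set V} {u : V} (v : V)
    (hu : u ∈ D) : distSet G D v ≤ G.dist u v :=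
  Nat.sInf_le ⟨u, hu, rfl⟩

lemma distSet_le_one {V : Type*} (G : SimpleGraph V) {D : Set V} {v : V}
    (hv : v ∈ closedNbhd G D) : distSet G D v ≤ 1 := by
  rcases hv with hv | ⟨u, hu, ha⟩
  · have := distSet_le_of_mem G v hv
    simp at this; omega
  · have := distSet_le_of_mem G v hu
    rwa [SimpleGraph.dist_eq_one_iff_adj.2 ha] at this

lemma distSet_eq_one {V : Type*} (G : SimpleGraph V) (hG : G.Connected) {D : Set V} {v : V}
    (hv : v ∈ closedNbhd G D) (hvD : v ∉ D) : distSet G D v = 1 := by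
  have h1 := distSet_le_one G hv
  have hne : D.Nonempty := by
    rcases hv with hv | ⟨u, hu, ha⟩
    · exact ⟨v, hv⟩
    · exact ⟨u, hu⟩
  obtain ⟨u, hu, he⟩ := Nat.sInf_mem (hne.image (fun u => G.dist u v))
  have h0 : distSet G D v ≠ 0 := by
    intro h0
    have h2 : G.dist u v = 0 := by
      have : G.dist u v = distSet G D v := he
      omega
    rw [hG.dist_eq_zero_iff] at h2
    exact hvD (h2 ▸ hu)
  omega

lemma induce_insert_conn {V : Type*} (G : SimpleGraph V) {D : Set V} {d x : V}
    (hD : (G.induce D).Connected) (hd : d ∈ D) (ha : G.Adj d x) :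
    (G.induce (insert x D)).Connected := by
  have h := SimpleGraph.induce_union_connected hD.preconnected
    (SimpleGraph.induce_pair_connected_of_adj ha).preconnected ⟨d, hd, by simp⟩
  have e : D ∪ {d, x} = insert x D := by
    ext y; simp only [Set.mem_union, Set.mem_insert_iff, Set.mem_singleton_iff]
    constructor
    · rintro (h | rfl | h) <;> simp_all
    · rintro (h | h) <;> simp_all
  rwa [e] at h

/-- The main case: minimum degree at least two. -/
lemma main_case {V : Type*} [Fintype V] (G : SimpleGraph V) (hG : G.Connected)
    (δ : ℕ) (h2 : 2 ≤ δ) (hδ : ∀ v : V, δ ≤ deg G v) :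
    ∃ D : Set V, (∀ v : V, ∃ u ∈ D, G.dist u v ≤ 2) ∧ (G.induce D).Connected ∧
      (∀ v : V, distSet G D v = 2 →
        2 ≤ (G.neighborSet v ∩ {w : V | distSet G D w = 1}).ncard) ∧
      (δ + 1) * (D.ncard + 2) ≤ 3 * Fintype.card V := by
  obtain ⟨r⟩ := hG.nonempty
  have hstart : (G.induce {r}).Connected ∧
      (δ + 1) * (({r} : Set V).ncard + 2) ≤ 3 * (closedNbhd G {r}).ncard := by
    refine ⟨?_, ?_⟩
    · have : Nonempty ({r} : Set V) := ⟨⟨r, rfl⟩⟩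
      exact ⟨SimpleGraph.Preconnected.of_subsingleton⟩
    · have e : closedNbhd G {r} = insert r (G.neighborSet r) := by
        ext y; simp [closedNbhd]
      rw [e, Set.ncard_insert_of_notMem (by simp) (Set.toFinite _), Set.ncard_singleton]
      have := hδ r
      unfold deg at this
      omega
  obtain ⟨D, hrD, hmax⟩ := Finite.exists_le_maximal (p := fun D : Set V =>
    (G.induce D).Connected ∧ (δ + 1) * (D.ncard + 2) ≤ 3 * (closedNbhd G D).ncard) hstart
  obtain ⟨⟨hconn, hcard⟩, hmax⟩ := hmax
  have hr : r ∈ D := hrD rfl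
  -- every vertex lies within distance two
  have hdom : ∀ v, v ∈ closedNbhd G (closedNbhd G D) := by
    by_contra hcon
    push Not at hcon
    obtain ⟨z, hz⟩ := hcon
    obtain ⟨p⟩ := hG.preconnected r z
    obtain ⟨⟨⟨w, v⟩, hwv⟩, -, hw, hv⟩ :=
      p.exists_boundary_dart (closedNbhd G (closedNbhd G D)) (Or.inl (Or.inl hr)) hz
    simp only at hw hv hwv
    have hwC : w ∉ closedNbhd G D := fun h => hv (Or.inr ⟨w, h, hwv⟩)
    obtain ⟨x, hx, hxw⟩ := hw.resolve_left hwC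
    have hxD : x ∉ D := fun h => hwC (Or.inr ⟨x, h, hxw⟩)
    obtain ⟨d, hd, hdx⟩ := hx.resolve_left hxD
    have hc1 := induce_insert_conn G hconn hd hdx
    have hc2 := induce_insert_conn G hc1 (Set.mem_insert x D) hxw
    have hc3 := induce_insert_conn G hc2 (Set.mem_insert w _) hwv
    have hsub : D ⊆ insert v (insert w (insert x D)) := fun y hy =>
      Or.inr (Or.inr (Or.inr hy))
    have hcD : (insert v (insert w (insert x D))).ncard ≤ D.ncard + 3 := by
      have a := Set.ncard_insert_le v (insert w (insert x D))
      have b := Set.ncard_insert_le w (insert x D)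
      have c := Set.ncard_insert_le x D
      omega
    have hdisj : Disjoint (closedNbhd G D) (insert v (G.neighborSet v)) := by
      rw [Set.disjoint_left]
      rintro y hy (rfl | hy')
      · exact hv (Or.inl hy)
      · exact hv (Or.inr ⟨y, hy, G.adj_symm hy'⟩)
    have hbig : closedNbhd G D ∪ insert v (G.neighborSet v) ⊆
        closedNbhd G (insert v (insert w (insert x D))) := by
      rintro y (hy | rfl | hy)
      · exact closedNbhd_mono G hsub hy
      · exact Or.inl (Or.inl rfl)
      · exact Or.inr ⟨v, Or.inl rfl, hy⟩
    have hle := Set.ncard_le_ncard hbig (Set.toFinite _)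
    rw [Set.ncard_union_eq hdisj (Set.toFinite _) (Set.toFinite _),
      Set.ncard_insert_of_notMem (by simp) (Set.toFinite _)] at hle
    have hdv := hδ v
    unfold deg at hdv
    have hvD := hmax (y := insert v (insert w (insert x D))) ⟨hc3, by nlinarith⟩ hsub
      (Set.mem_insert v _)
    exact hv (Or.inl (Or.inl hvD))
  refine ⟨D, ?_, hconn, ?_, ?_⟩
  · intro v
    have key : ∀ x ∈ closedNbhd G D, ∃ u ∈ D, G.dist u x ≤ 1 := by
      rintro x (hx | ⟨u, hu, ha⟩)
      · exact ⟨x, hx, by simp⟩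
      · exact ⟨u, hu, (SimpleGraph.dist_eq_one_iff_adj.2 ha).le⟩
    rcases hdom v with hv | ⟨x, hx, hxv⟩
    · obtain ⟨u, hu, h⟩ := key v hv
      exact ⟨u, hu, by omega⟩
    · obtain ⟨u, hu, h⟩ := key x hx
      have h3 := hG.dist_triangle (u := u) (v := x) (w := v)
      rw [SimpleGraph.dist_eq_one_iff_adj.2 hxv] at h3
      exact ⟨u, hu, by omega⟩
  · intro v hv2
    have hvC : v ∉ closedNbhd G D := fun h => by
      have := distSet_le_one G h
      omega
    obtain ⟨x, hx, hxv⟩ := (hdom v).resolve_left hvC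
    have hxD : x ∉ D := fun h => hvC (Or.inr ⟨x, h, hxv⟩)
    obtain ⟨d, hd, hdx⟩ := hx.resolve_left hxD
    by_contra hlt
    have hc1 := induce_insert_conn G hconn hd hdx
    have hc2 := induce_insert_conn G hc1 (Set.mem_insert x D) hxv
    have hsub : D ⊆ insert v (insert x D) := fun y hy => Or.inr (Or.inr hy)
    have hcD : (insert v (insert x D)).ncard ≤ D.ncard + 2 := by
      have b := Set.ncard_insert_le v (insert x D)
      have c := Set.ncard_insert_le x D
      omega
    have hdisj : Disjoint (closedNbhd G D) (insert v (G.neighborSet v \ closedNbhd G D)) := by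
      rw [Set.disjoint_left]
      rintro y hy (rfl | hy')
      · exact hvC hy
      · exact hy'.2 hy
    have hbig : closedNbhd G D ∪ insert v (G.neighborSet v \ closedNbhd G D) ⊆
        closedNbhd G (insert v (insert x D)) := by
      rintro y (hy | rfl | hy)
      · exact closedNbhd_mono G hsub hy
      · exact Or.inl (Or.inl rfl)
      · exact Or.inr ⟨v, Or.inl rfl, hy.1⟩
    have hle := Set.ncard_le_ncard hbig (Set.toFinite _)
    rw [Set.ncard_union_eq hdisj (Set.toFinite _) (Set.toFinite _),
      Set.ncard_insert_of_notMem (by simp) (Set.toFinite _)] at hle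
    have hint : G.neighborSet v ∩ closedNbhd G D ⊆
        G.neighborSet v ∩ {w : V | distSet G D w = 1} := by
      rintro y ⟨hy, hyC⟩
      refine ⟨hy, distSet_eq_one G hG hyC fun h => hvC (Or.inr ⟨y, h, G.adj_symm hy⟩)⟩
    have hle2 := Set.ncard_le_ncard hint (Set.toFinite _)
    have hsum := Set.ncard_inter_add_ncard_sdiff_eq_ncard (G.neighborSet v) (closedNbhd G D)
      (Set.toFinite _)
    have hdv := hδ v
    unfold deg at hdv
    have hge : (closedNbhd G D).ncard + δ ≤
        (closedNbhd G (insert v (insert x D))).ncard := by omega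
    have hvD := hmax (y := insert v (insert x D)) ⟨hc2, by nlinarith⟩ hsub
      (Set.mem_insert v _)
    exact hvC (Or.inl hvD)
  · have := Set.ncard_le_card (closedNbhd G D)
    rw [Nat.card_eq_fintype_card] at this
    omega

/-- Every finite connected graph of order `n ≥ 4` and minimum degree
`δ` has a connected two-way two-step dominating set of size at most `3n/(δ + 1) − 2`. -/
theorem stmt_13 {V : Type*} [Fintype V] (G : SimpleGraph V) (hG : G.Connected)
    (hn : 4 ≤ Fintype.card V)
    (δ : ℕ) (hδ : ∀ v : V, δ ≤ deg G v) :
    ∃ D : Set V, (∀ v : V, ∃ u ∈ D, G.dist u v ≤ 2) ∧ (G.induce D).Connected ∧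
      (∀ v : V, deg G v = 1 → v ∈ D) ∧
      (∀ v : V, distSet G D v = 2 →
        2 ≤ (G.neighborSet v ∩ {w : V | distSet G D w = 1}).ncard) ∧
      (D.ncard : ℝ) ≤ 3 * (Fintype.card V : ℝ) / (δ + 1) - 2 := by
  rcases Nat.lt_or_ge δ 2 with h | h
  · refine ⟨Set.univ, fun v => ⟨v, trivial, by simp⟩, ?_, fun _ _ => trivial, ?_, ?_⟩
    · exact (SimpleGraph.induceUnivIso G).connected_iff.2 hG
    · intro v hv
      have := distSet_le_of_mem G v (Set.mem_univ v)
      simp at this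
      omega
    · rw [Set.ncard_univ, Nat.card_eq_fintype_card]
      have hn' : (4 : ℝ) ≤ Fintype.card V := by exact_mod_cast hn
      interval_cases δ <;> norm_num <;> linarith
  · obtain ⟨D, h1, h3, h4, h5⟩ := main_case G hG δ h hδ
    refine ⟨D, h1, h3, ?_, h4, ?_⟩
    · intro v hv
      have := hδ v
      omega
    · have h6 : ((δ : ℝ) + 1) * (D.ncard + 2) ≤ 3 * Fintype.card V := by exact_mod_cast h5
      rw [le_sub_iff_add_le, le_div_iff₀ (by positivity)]
      linarith
end

section
/- For every integer d ≥ 3 there exists a finite connected simple interval graph G with minimum degree at least 2 and diameter d such that rc(G) = d + 1. Concretely, the graph with vertex set {x_1, …, x_{d−1}} ∪ {y_1, y_2, y_3, y_4} ∪ {z_1, z_2, z_3, z_4}, where x_1, …, x_{d−1} form a path, each y_i is adjacent to x_1, each z_i is adjacent to x_{d−1}, and additionally the edges y_1y_2, y_3y_4, z_1z_2, z_3z_4 are present, is an interval graph with minimum degree 2 and diameter d whose rainbow connection number is d + 1. -/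
open SimpleGraph Set

/-- The relation generating the example graph: vertices `Sum.inl i` are the path vertices
`x_1, …, x_{d-1}` (index `i = 0, …, d-2`), vertices `Sum.inr (Sum.inl k)` are
`y_1, …, y_4` and vertices `Sum.inr (Sum.inr k)` are `z_1, …, z_4`.  The `x_i` form a
path, each `y` is adjacent to `x_1`, each `z` is adjacent to `x_{d-1}`, and additionally
the edges `y_1y_2`, `y_3y_4`, `z_1z_2`, `z_3z_4` are present. -/
def exRel (d : ℕ) : (Fin (d - 1) ⊕ (Fin 4 ⊕ Fin 4)) → (Fin (d - 1) ⊕ (Fin 4 ⊕ Fin 4)) → Prop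
  | Sum.inl i, Sum.inl j => (i : ℕ) + 1 = (j : ℕ)
  | Sum.inl i, Sum.inr (Sum.inl _) => (i : ℕ) = 0
  | Sum.inl i, Sum.inr (Sum.inr _) => (i : ℕ) = d - 2
  | Sum.inr (Sum.inl k), Sum.inr (Sum.inl m) =>
      ((k : ℕ) = 0 ∧ (m : ℕ) = 1) ∨ ((k : ℕ) = 2 ∧ (m : ℕ) = 3)
  | Sum.inr (Sum.inr k), Sum.inr (Sum.inr m) =>
      ((k : ℕ) = 0 ∧ (m : ℕ) = 1) ∨ ((k : ℕ) = 2 ∧ (m : ℕ) = 3)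
  | _, _ => False

/-- The example graph from Figure 1 of the paper. -/
def exGraph (d : ℕ) : SimpleGraph (Fin (d - 1) ⊕ (Fin 4 ⊕ Fin 4)) :=
  SimpleGraph.fromRel (exRel d)

section Helpers

theorem exG_adj (d : ℕ) (u v) :
    (exGraph d).Adj u v ↔ u ≠ v ∧ (exRel d u v ∨ exRel d v u) := by
  simp [exGraph, SimpleGraph.fromRel_adj]

theorem exG_interval (d : ℕ) (hd : 3 ≤ d) : IsIntervalGraph (exGraph d) := by
  let a : (Fin (d - 1) ⊕ (Fin 4 ⊕ Fin 4)) → ℕ := fun v => match v with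
    | Sum.inl i => 2 * i
    | Sum.inr (Sum.inl k) => k / 2
    | Sum.inr (Sum.inr k) => 2 * d - 2 - k / 2
  let b : (Fin (d - 1) ⊕ (Fin 4 ⊕ Fin 4)) → ℕ := fun v => match v with
    | Sum.inl i => 2 * i + 2
    | Sum.inr (Sum.inl k) => k / 2
    | Sum.inr (Sum.inr k) => 2 * d - 2 - k / 2
  have hab : ∀ v, a v ≤ b v := by
    rintro (i | k | k) <;> simp [a, b]
  refine ⟨fun v => (a v : ℝ), fun v => (b v : ℝ), fun v => Nat.cast_le.2 (hab v), ?_⟩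
  intro u v huv
  have h1 : (Set.Icc (a u : ℝ) (b u) ∩ Set.Icc (a v : ℝ) (b v)).Nonempty ↔
      a u ≤ b v ∧ a v ≤ b u := by
    rw [Set.Icc_inter_Icc, Set.nonempty_Icc]
    have h1 := hab u
    have h2 := hab v
    simp only [sup_le_iff, le_inf_iff]
    norm_cast
    tauto
  rw [h1, exG_adj]
  rcases u with i | k | k <;> rcases v with j | m | m <;>
    simp [a, b, exRel, Fin.ext_iff, -Fin.val_eq_zero_iff] at huv ⊢ <;> omega

/-- The height function: `y ↦ 0`, `x_i ↦ i`, `z ↦ d`. -/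
def exH (d : ℕ) : (Fin (d - 1) ⊕ (Fin 4 ⊕ Fin 4)) → ℕ
  | Sum.inl i => i + 1
  | Sum.inr (Sum.inl _) => 0
  | Sum.inr (Sum.inr _) => d

theorem exH_lip (d : ℕ) (u v) (h : (exGraph d).Adj u v) :
    exH d v ≤ exH d u + 1 := by
  rw [exG_adj] at h
  rcases u with i | k | k <;> rcases v with j | m | m <;>
    simp [exRel, exH, Fin.ext_iff, -Fin.val_eq_zero_iff] at h ⊢ <;> omega

theorem exH_walk (d : ℕ) (u v) (p : (exGraph d).Walk u v) :
    exH d v ≤ exH d u + p.length := by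
  induction p with
  | nil => simp
  | cons h p ih =>
    have := exH_lip d _ _ h
    simp only [SimpleGraph.Walk.length_cons]
    omega

theorem exG_rainbow_of_walk {V : Type*} {G : SimpleGraph V} {c : Sym2 V → ℕ} {u v : V}
    (p : G.Walk u v) (hp : (p.edges.map c).Nodup) :
    ∃ p : G.Walk u v, p.IsPath ∧ (p.edges.map c).Nodup := by
  classical
  refine ⟨p.bypass, p.bypass_isPath, ?_⟩
  refine List.Nodup.map_on ?_ p.bypass_isPath.isTrail.edges_nodup
  intro x hx y hy hxy
  exact List.inj_on_of_nodup_map hp (p.edges_bypass_subset_edges hx) (p.edges_bypass_subset_edges hy) hxy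

/-- The colouring. -/
def exColF (d : ℕ) : (Fin (d - 1) ⊕ (Fin 4 ⊕ Fin 4)) → (Fin (d - 1) ⊕ (Fin 4 ⊕ Fin 4)) → ℕ
  | Sum.inl i, Sum.inl j => min i j
  | Sum.inl _, Sum.inr (Sum.inl k) => d - 2 + k % 2
  | Sum.inl _, Sum.inr (Sum.inr k) => d - 2 + k % 2
  | Sum.inr (Sum.inl k), Sum.inl _ => d - 2 + k % 2
  | Sum.inr (Sum.inr k), Sum.inl _ => d - 2 + k % 2
  | Sum.inr _, Sum.inr _ => d

theorem exColF_symm (d : ℕ) (u v) : exColF d u v = exColF d v u := by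
  rcases u with i | k | k <;> rcases v with j | m | m <;> simp [exColF, min_comm]

def exCol (d : ℕ) : Sym2 (Fin (d - 1) ⊕ (Fin 4 ⊕ Fin 4)) → ℕ :=
  Sym2.lift ⟨exColF d, exColF_symm d⟩

theorem exCol_mk (d : ℕ) (u v) : exCol d s(u, v) = exColF d u v := rfl

theorem exCol_lt (d : ℕ) (hd : 3 ≤ d) (e) (he : e ∈ (exGraph d).edgeSet) : exCol d e < d + 1 := by
  induction e with
  | _ u v =>
    rw [SimpleGraph.mem_edgeSet, exG_adj] at he
    rw [exCol_mk]
    rcases u with i | k | k <;> rcases v with j | m | m <;> simp [exColF, exRel] at he ⊢ <;> omega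

theorem exSpine (d n : ℕ) : ∀ (i j : Fin (d - 1)), (i : ℕ) + n = j →
    ∃ p : (exGraph d).Walk (Sum.inl i) (Sum.inl j), p.edges.map (exCol d) = List.range' i n := by
  induction n with
  | zero =>
    intro i j h
    obtain rfl : i = j := Fin.ext (by omega)
    exact ⟨SimpleGraph.Walk.nil, by simp⟩
  | succ n ih =>
    intro i j h
    have hi : (i : ℕ) + 1 < d - 1 := by omega
    obtain ⟨p, hp⟩ := ih ⟨i + 1, hi⟩ j (by simp; omega)
    have hadj : (exGraph d).Adj (Sum.inl i) (Sum.inl ⟨i + 1, hi⟩) := by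
      rw [exG_adj]; simp [exRel, Fin.ext_iff, -Fin.val_eq_zero_iff]
    refine ⟨SimpleGraph.Walk.cons hadj p, ?_⟩
    rw [SimpleGraph.Walk.edges_cons, List.map_cons, hp, exCol_mk]
    simp [exColF, List.range'_succ]

theorem exY_adj (d : ℕ) (hd : 3 ≤ d) (k : Fin 4) :
    (exGraph d).Adj (Sum.inr (Sum.inl k)) (Sum.inl ⟨0, by omega⟩) := by
  rw [exG_adj]; simp [exRel]

theorem exZ_adj (d : ℕ) (hd : 3 ≤ d) (k : Fin 4) :
    (exGraph d).Adj (Sum.inl ⟨d - 2, by omega⟩) (Sum.inr (Sum.inr k)) := by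
  rw [exG_adj]; simp [exRel]

/-- The partner of an index. -/
def exP (k : Fin 4) : Fin 4 := ![1, 0, 3, 2] k

theorem exP_mod (k : Fin 4) : (exP k : ℕ) % 2 = 1 - k % 2 := by
  fin_cases k <;> rfl

theorem exYY_adj (d : ℕ) (k : Fin 4) :
    (exGraph d).Adj (Sum.inr (Sum.inl k)) (Sum.inr (Sum.inl (exP k))) := by
  rw [exG_adj]; fin_cases k <;> simp [exRel, exP]

theorem exZZ_adj (d : ℕ) (k : Fin 4) :
    (exGraph d).Adj (Sum.inr (Sum.inr k)) (Sum.inr (Sum.inr (exP k))) := by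
  rw [exG_adj]; fin_cases k <;> simp [exRel, exP]

/-- Short walks, giving the diameter bound. -/
theorem exShort (d : ℕ) (hd : 3 ≤ d) (u v) : ∃ p : (exGraph d).Walk u v, p.length ≤ d := by
  have sp : ∀ i j : Fin (d - 1), (i : ℕ) ≤ j →
      ∃ p : (exGraph d).Walk (Sum.inl i) (Sum.inl j), p.length = j - i := by
    intro i j hij
    obtain ⟨p, hp⟩ := exSpine d (j - i) i j (by omega)
    refine ⟨p, ?_⟩
    have := congrArg List.length hp
    simpa using this
  have key : ∀ u v, exH d u ≤ exH d v → ∃ p : (exGraph d).Walk u v, p.length ≤ d := by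
    rintro (i | k | k) (j | m | m) h <;> simp only [exH] at h
    · obtain ⟨p, hp⟩ := sp i j (by omega)
      exact ⟨p, by omega⟩
    · omega
    · obtain ⟨p, hp⟩ := sp i ⟨d - 2, by omega⟩ (by simp; omega)
      exact ⟨p.append (exZ_adj d hd m).toWalk, by simp [hp]; omega⟩
    · obtain ⟨p, hp⟩ := sp ⟨0, by omega⟩ j (by simp)
      exact ⟨SimpleGraph.Walk.cons (exY_adj d hd k) p, by simp [hp]; omega⟩
    · exact ⟨SimpleGraph.Walk.cons (exY_adj d hd k) (exY_adj d hd m).symm.toWalk, by simp; omega⟩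
    · obtain ⟨p, hp⟩ := sp ⟨0, by omega⟩ ⟨d - 2, by omega⟩ (by simp)
      exact ⟨SimpleGraph.Walk.cons (exY_adj d hd k) (p.append (exZ_adj d hd m).toWalk),
        by simp [hp]; omega⟩
    · omega
    · omega
    · exact ⟨SimpleGraph.Walk.cons (exZ_adj d hd k).symm (exZ_adj d hd m).toWalk, by simp; omega⟩
  rcases le_total (exH d u) (exH d v) with h | h
  · exact key u v h
  · obtain ⟨p, hp⟩ := key v u h
    exact ⟨p.reverse, by simpa using hp⟩

theorem exConn (d : ℕ) (hd : 3 ≤ d) : (exGraph d).Connected := by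
  have : Nonempty (Fin (d - 1) ⊕ (Fin 4 ⊕ Fin 4)) := ⟨Sum.inr (Sum.inl 0)⟩
  exact ⟨fun u v => ⟨(exShort d hd u v).choose⟩⟩

theorem exDiam (d : ℕ) (hd : 3 ≤ d) : graphDiam (exGraph d) = d := by
  have hle : ∀ u v, (exGraph d).dist u v ≤ d := fun u v => by
    obtain ⟨p, hp⟩ := exShort d hd u v
    exact (SimpleGraph.dist_le p).trans hp
  have hge : d ≤ (exGraph d).dist (Sum.inr (Sum.inl 0)) (Sum.inr (Sum.inr 0)) := by
    obtain ⟨p, hp⟩ := (exConn d hd).exists_walk_length_eq_dist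
      (Sum.inr (Sum.inl 0)) (Sum.inr (Sum.inr 0))
    have := exH_walk d _ _ p
    simp only [exH] at this
    omega
  apply le_antisymm
  · refine csSup_le (Set.range_nonempty_iff_nonempty.2
      ⟨(Sum.inr (Sum.inl 0), Sum.inr (Sum.inl 0))⟩) ?_
    rintro _ ⟨p, rfl⟩
    exact hle _ _
  · refine hge.trans (le_csSup ⟨d, ?_⟩ ⟨(Sum.inr (Sum.inl 0), Sum.inr (Sum.inr 0)), rfl⟩)
    rintro _ ⟨p, rfl⟩
    exact hle _ _

theorem exDeg_ge (d : ℕ) (hd : 3 ≤ d) (v) : 2 ≤ deg (exGraph d) v := by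
  have key : ∀ a b, a ≠ b → (exGraph d).Adj v a → (exGraph d).Adj v b →
      2 ≤ deg (exGraph d) v := by
    intro a b hab ha hb
    rw [← Set.ncard_pair hab]
    apply Set.ncard_le_ncard _ (Set.toFinite _)
    rintro x (rfl | rfl)
    · exact ha
    · exact hb
  have z0 : 0 < d - 1 := by omega
  rcases v with i | k | k
  · by_cases h0 : (i : ℕ) = 0
    · obtain rfl : i = ⟨0, z0⟩ := Fin.ext h0
      exact key _ _ (by simp) (exY_adj d hd 0).symm (exY_adj d hd 1).symm
    · have h1 : (exGraph d).Adj (Sum.inl i) (Sum.inl ⟨i - 1, by omega⟩) := by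
        rw [exG_adj]; simp [exRel, Fin.ext_iff, -Fin.val_eq_zero_iff]; omega
      by_cases h2 : (i : ℕ) = d - 2
      · have h3 : (exGraph d).Adj (Sum.inl i) (Sum.inr (Sum.inr 0)) := by
          rw [exG_adj]; simp [exRel, h2]
        exact key _ _ (by simp) h1 h3
      · have h3 : (exGraph d).Adj (Sum.inl i) (Sum.inl ⟨i + 1, by omega⟩) := by
          rw [exG_adj]; simp [exRel, Fin.ext_iff, -Fin.val_eq_zero_iff]
        exact key _ _ (by simp) h1 h3
  · exact key _ _ (by simp) (exY_adj d hd k) (exYY_adj d k)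
  · exact key _ _ (by simp) (exZ_adj d hd k).symm (exZZ_adj d k)

theorem exDeg_eq (d : ℕ) (hd : 3 ≤ d) : deg (exGraph d) (Sum.inr (Sum.inl 0)) = 2 := by
  have : (exGraph d).neighborSet (Sum.inr (Sum.inl 0)) =
      {Sum.inl ⟨0, by omega⟩, Sum.inr (Sum.inl 1)} := by
    ext v
    rw [SimpleGraph.mem_neighborSet, exG_adj]
    rcases v with j | m | m <;> simp [exRel, Fin.ext_iff, -Fin.val_eq_zero_iff] <;> omega
  rw [deg, this, Set.ncard_pair (by simp)]

/-- The colouring with `d + 1` colours is rainbow. -/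
theorem exRainbow (d : ℕ) (hd : 3 ≤ d) : RainbowConnectedUnder (exGraph d) (exCol d) := by
  have key : ∀ u v, exH d u ≤ exH d v →
      ∃ p : (exGraph d).Walk u v, (p.edges.map (exCol d)).Nodup := by
    rintro (i | k | k) (j | m | m) h <;> simp only [exH] at h
    · obtain ⟨p, hp⟩ := exSpine d (j - i) i j (by omega)
      exact ⟨p, by rw [hp]; exact List.nodup_range'⟩
    · omega
    · obtain ⟨p, hp⟩ := exSpine d (d - 2 - i) i ⟨d - 2, by omega⟩ (by simp; omega)
      refine ⟨(SimpleGraph.Walk.cons (exZ_adj d hd m).symm p.reverse).reverse, ?_⟩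
      simp [hp, exCol_mk, exColF, List.nodup_append, List.nodup_range', List.mem_range']
      intros; omega
    · obtain ⟨p, hp⟩ := exSpine d j ⟨0, by omega⟩ j (by simp)
      refine ⟨SimpleGraph.Walk.cons (exY_adj d hd k) p, ?_⟩
      simp [hp, exCol_mk, exColF, List.nodup_range', List.mem_range']
      intros; omega
    · by_cases hkm : (k : ℕ) % 2 = m % 2
      · refine ⟨SimpleGraph.Walk.cons (exYY_adj d k)
          (SimpleGraph.Walk.cons (exY_adj d hd (exP k)) (exY_adj d hd m).symm.toWalk), ?_⟩
        have := exP_mod k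
        simp [exCol_mk, exColF]
        omega
      · refine ⟨SimpleGraph.Walk.cons (exY_adj d hd k) (exY_adj d hd m).symm.toWalk, ?_⟩
        simp [exCol_mk, exColF]
        omega
    · obtain ⟨p, hp⟩ := exSpine d (d - 2) ⟨0, by omega⟩ ⟨d - 2, by omega⟩ (by simp)
      by_cases hkm : (k : ℕ) % 2 = m % 2
      · refine ⟨SimpleGraph.Walk.cons (exYY_adj d k) (SimpleGraph.Walk.cons (exY_adj d hd (exP k))
          (p.append (exZ_adj d hd m).toWalk)), ?_⟩
        have := exP_mod k
        simp [hp, exCol_mk, exColF, List.nodup_append, List.nodup_range', List.mem_range']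
        grind
      · refine ⟨SimpleGraph.Walk.cons (exY_adj d hd k)
          (p.append (exZ_adj d hd m).toWalk), ?_⟩
        simp [hp, exCol_mk, exColF, List.nodup_append, List.nodup_range', List.mem_range']
        grind
    · omega
    · omega
    · by_cases hkm : (k : ℕ) % 2 = m % 2
      · refine ⟨SimpleGraph.Walk.cons (exZZ_adj d k)
          (SimpleGraph.Walk.cons (exZ_adj d hd (exP k)).symm (exZ_adj d hd m).toWalk), ?_⟩
        have := exP_mod k
        simp [exCol_mk, exColF]
        omega
      · refine ⟨SimpleGraph.Walk.cons (exZ_adj d hd k).symm (exZ_adj d hd m).toWalk, ?_⟩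
        simp [exCol_mk, exColF]
        omega
  intro u v
  rcases le_total (exH d u) (exH d v) with h | h
  · obtain ⟨p, hp⟩ := key u v h
    exact exG_rainbow_of_walk p hp
  · obtain ⟨p, hp⟩ := key v u h
    refine exG_rainbow_of_walk p.reverse ?_
    simpa using hp

/-- Shortest walks towards a fixed `z` from a path vertex are unique. -/
theorem exUnique (d : ℕ) (hd : 3 ≤ d) {u w} (p : (exGraph d).Walk u w)
    (hw : w = Sum.inr (Sum.inr 0)) (hu : 1 ≤ exH d u) (hp : exH d u + p.length = d) :
    ∀ q : (exGraph d).Walk u w, exH d u + q.length = d → p.edges = q.edges := by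
  induction p with
  | nil =>
    intro q hq
    subst hw
    simp only [exH] at hq
    have : q.length = 0 := by omega
    cases q with
    | nil => rfl
    | cons h q => simp at this
  | @cons a b e h p ih =>
    intro q hq
    cases q with
    | nil => simp at hq hp; omega
    | @cons _ b' _ h' q =>
      simp only [SimpleGraph.Walk.length_cons] at hp hq
      have e1 := exH_walk d _ _ p
      have e2 := exH_walk d _ _ q
      have e3 := exH_lip d _ _ h
      have e4 := exH_lip d _ _ h'
      have e5 : exH d e = d := by subst hw; rfl
      have hb : b = b' := by
        by_cases hl : p.length = 0
        · rw [SimpleGraph.Walk.eq_of_length_eq_zero hl,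
            SimpleGraph.Walk.eq_of_length_eq_zero (p := q) (by omega)]
        · have f1 : exH d b = exH d b' := by omega
          have f2 : exH d b < d := by omega
          have f3 : 1 ≤ exH d b := by omega
          rcases b with i | k | k <;> rcases b' with j | m | m <;>
            simp [exH, Fin.ext_iff, -Fin.val_eq_zero_iff] at f1 f2 f3 ⊢ <;> omega
      subst hb
      simp only [SimpleGraph.Walk.edges_cons]
      rw [ih hw (by omega) (by omega) q (by omega)]

theorem exLenBound (L : List ℕ) (n : ℕ) (h : L.Nodup) (hL : ∀ x ∈ L, x < n) : L.length ≤ n := by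
  have h1 : L.toFinset ⊆ Finset.range n := by
    intro x hx
    simpa using hL x (by simpa using hx)
  have h2 := Finset.card_le_card h1
  rwa [List.toFinset_card_of_nodup h, Finset.card_range] at h2

theorem exLower (d : ℕ) (hd : 3 ≤ d) (c) (hc : ∀ e ∈ (exGraph d).edgeSet, c e < d)
    (hr : RainbowConnectedUnder (exGraph d) c) : False := by
  have z0 : 0 < d - 1 := by omega
  have step : ∀ k : Fin 4, ∃ q : (exGraph d).Walk (Sum.inl ⟨0, by omega⟩) (Sum.inr (Sum.inr 0)),
      1 + q.length = d ∧
      (c s(Sum.inr (Sum.inl k), Sum.inl ⟨0, by omega⟩) :: q.edges.map c).Nodup := by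
    intro k
    obtain ⟨p, -, hp⟩ := hr (Sum.inr (Sum.inl k)) (Sum.inr (Sum.inr 0))
    have hlen : p.length ≤ d := by
      have := exLenBound _ d hp (by
        intro x hx
        obtain ⟨e, he, rfl⟩ := List.mem_map.1 hx
        exact hc e (p.edges_subset_edgeSet he))
      simpa using this
    cases p with
    | @cons _ b _ h q =>
      have e1 := exH_walk d _ _ q
      have e2 := exH_lip d _ _ h
      simp only [SimpleGraph.Walk.length_cons] at hlen
      simp only [exH] at e1 e2
      have hb : b = Sum.inl ⟨0, z0⟩ := by
        rcases b with i | m | m <;> simp [exH, Fin.ext_iff, -Fin.val_eq_zero_iff] at e1 e2 ⊢ <;> omega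
      subst hb
      simp only [exH] at e1
      exact ⟨q, by omega, by simpa using hp⟩
  have hcol : ∀ k : Fin 4, c s(Sum.inr (Sum.inl k), Sum.inl ⟨0, by omega⟩) =
      c s(Sum.inr (Sum.inl 0), Sum.inl ⟨0, by omega⟩) := by
    intro k
    by_contra hne
    obtain ⟨q, hq, hn⟩ := step k
    obtain ⟨q', hq', hn'⟩ := step 0
    rw [← exUnique d hd q rfl (by simp [exH]) (by simpa [exH] using hq) q'
      (by simpa [exH] using hq')] at hn'
    have := exLenBound (c s(Sum.inr (Sum.inl k), Sum.inl ⟨0, by omega⟩) ::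
      c s(Sum.inr (Sum.inl 0), Sum.inl ⟨0, by omega⟩) :: q.edges.map c) d (by
        rw [List.nodup_cons] at hn ⊢
        refine ⟨?_, hn'⟩
        rw [List.mem_cons]
        rintro (h | h)
        · exact hne h
        · exact hn.1 h) (by
        intro x hx
        simp only [List.mem_cons, List.mem_map] at hx
        rcases hx with rfl | rfl | ⟨e, he, rfl⟩
        · exact hc _ (exY_adj d hd k)
        · exact hc _ (exY_adj d hd 0)
        · exact hc _ (q.edges_subset_edgeSet he))
    simp at this
    omega
  obtain ⟨p, -, hp⟩ := hr (Sum.inr (Sum.inl 0)) (Sum.inr (Sum.inl 2))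
  obtain ⟨d1, hd1, h1, h1'⟩ := p.exists_boundary_dart
    {Sum.inr (Sum.inl 0), Sum.inr (Sum.inl 1)} (by simp) (by simp)
  obtain ⟨d2, hd2, h2, h2'⟩ := p.exists_boundary_dart
    {Sum.inr (Sum.inl 2), Sum.inr (Sum.inl 3)}ᶜ (by simp) (by simp)
  have k1 : ∃ k : Fin 4, (k : ℕ) < 2 ∧
      d1.edge = s(Sum.inr (Sum.inl k), Sum.inl ⟨0, by omega⟩) := by
    obtain ⟨⟨a, b⟩, hab⟩ := d1
    rw [exG_adj] at hab
    simp only [SimpleGraph.Dart.edge_mk] at *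
    rcases h1 with h1 | h1 <;> (try dsimp only at h1) <;> subst h1 <;> rcases b with i | m | m <;>
      simp [exRel, Fin.ext_iff, -Fin.val_eq_zero_iff] at hab h1' ⊢ <;> first | omega | skip
    · exact ⟨0, by simp, by simp [hab]⟩
    · exact ⟨1, by simp, by simp [hab]⟩
  have k2 : ∃ k : Fin 4, 2 ≤ (k : ℕ) ∧
      d2.edge = s(Sum.inr (Sum.inl k), Sum.inl ⟨0, by omega⟩) := by
    obtain ⟨⟨a, b⟩, hab⟩ := d2
    rw [exG_adj] at hab
    simp only [Set.mem_compl_iff, not_not] at h2 h2'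
    rcases h2' with h1 | h1 <;> (try dsimp only at h1) <;> subst h1 <;> rcases a with i | m | m <;>
      simp [exRel, Fin.ext_iff, -Fin.val_eq_zero_iff] at hab h2 ⊢ <;> first | omega | skip
    · exact ⟨2, by simp, by simp [hab]⟩
    · exact ⟨3, by simp, by simp [hab]⟩
  obtain ⟨k, hk, ek⟩ := k1
  obtain ⟨m, hm, em⟩ := k2
  have m1 : d1.edge ∈ p.edges := List.mem_map.2 ⟨d1, hd1, rfl⟩
  have m2 : d2.edge ∈ p.edges := List.mem_map.2 ⟨d2, hd2, rfl⟩
  have := List.inj_on_of_nodup_map hp m1 m2 (by rw [ek, em, hcol k, hcol m])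
  rw [ek, em] at this
  simp at this
  omega

theorem exRc (d : ℕ) (hd : 3 ≤ d) : rc (exGraph d) = d + 1 := by
  have hmem : d + 1 ∈ {n | ∃ c : Sym2 (Fin (d - 1) ⊕ (Fin 4 ⊕ Fin 4)) → ℕ,
      (∀ e ∈ (exGraph d).edgeSet, c e < n) ∧ RainbowConnectedUnder (exGraph d) c} :=
    ⟨exCol d, exCol_lt d hd, exRainbow d hd⟩
  apply le_antisymm
  · exact Nat.sInf_le hmem
  · refine le_csInf ⟨_, hmem⟩ ?_
    rintro n ⟨c, hc, hr⟩
    by_contra hn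
    exact exLower d hd c (fun e he => (hc e he).trans_le (by omega)) hr

end Helpers

/-- For every `d ≥ 3`, the concrete graph `exGraph d` is a connected
interval graph with minimum degree exactly 2 and diameter `d`, whose rainbow connection
number equals `d + 1`.  (In particular, for every `d ≥ 3` there exists a finite connected
interval graph with minimum degree at least 2, diameter `d` and rainbow connection number
`d + 1`.) -/
theorem stmt_18 (d : ℕ) (hd : 3 ≤ d) :
    IsIntervalGraph (exGraph d) ∧ (exGraph d).Connected ∧
    (∀ v, 2 ≤ deg (exGraph d) v) ∧ (∃ v, deg (exGraph d) v = 2) ∧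
    graphDiam (exGraph d) = d ∧ rc (exGraph d) = d + 1 := by
  exact ⟨exG_interval d hd, exConn d hd, exDeg_ge d hd, ⟨_, exDeg_eq d hd⟩,
    exDiam d hd, exRc d hd⟩
end
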